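/- For all integers n ≥ 1, k ≥ 1 with k odd and all 0 ≤ j ≤ k, the real Lagrangian F = Fix(ρ_j) ∩ V has exactly two connected components: the sets F⁺ = F ∩ {z : Re(conj(ξ_j)·z_0) > 0} and F⁻ = F ∩ {z : Re(conj(ξ_j)·z_0) < 0} are nonempty, connected, open and closed in F, disjoint, and their union is F. -/

import Mathlib

/-!
Since `|ξ_j| = 1`, a point is fixed by `ρ_j` exactly when `z₀ = ξ_j x` and `z_m = i y_m` with `x` and
the `y_m` real. As `ξ_j^{k+1} = 1`, such a point lies on the Milnor fiber exactly when
`x^{k+1} = 1 + ∑ y_m²` (`mem_realLagrangian_iff`), and `x = Re(conj ξ_j · z₀)`.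
For `k + 1` even this hypersurface is the union of the two graphs `x = ±(1 + ∑ y_m²)^{1/(k+1)}` over
`ℝⁿ`. So each half is a continuous image of `ℝⁿ`, hence connected
(`realLagrangianPlus_eq_range`, `realLagrangianMinus_eq_range`), and `x` is nonzero on `F`, so the
sign of the continuous function `x` separates `F` into two clopen pieces.
-/

open Complex

/-- The root of unity `ξ_j = exp(2πi·j/(k+1))`. -/
noncomputable def milnorXi (k j : ℕ) : ℂ :=
  Complex.exp (2 * Real.pi * Complex.I * j / (k + 1))

/-- The anti-symplectic involution
`ρ_j(z) = (ξ_j² · conj z₀, −conj z₁, …, −conj zₙ)`. -/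
noncomputable def milnorRho (n k j : ℕ) (z : Fin (n + 1) → ℂ) : Fin (n + 1) → ℂ :=
  fun m => if m = 0 then (milnorXi k j) ^ 2 * (starRingEnd ℂ) (z 0)
           else -((starRingEnd ℂ) (z m))

/-- The A_k-type Milnor fiber `V = {z : z₀^{k+1} + z₁² + ⋯ + zₙ² = 1}`. -/
def milnorFiber (n k : ℕ) : Set (Fin (n + 1) → ℂ) :=
  {z | z 0 ^ (k + 1) + ∑ m : Fin n, (z m.succ) ^ 2 = 1}

/-- The real Lagrangian `F = Fix(ρ_j) ∩ V`. -/
noncomputable def realLagrangian (n k j : ℕ) : Set (Fin (n + 1) → ℂ) :=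
  {z | milnorRho n k j z = z} ∩ milnorFiber n k

/-- The piece of `F` where `Re(conj ξ_j · z₀) > 0`. -/
noncomputable def realLagrangianPlus (n k j : ℕ) : Set (Fin (n + 1) → ℂ) :=
  {z ∈ realLagrangian n k j | 0 < ((starRingEnd ℂ) (milnorXi k j) * z 0).re}

/-- The piece of `F` where `Re(conj ξ_j · z₀) < 0`. -/
noncomputable def realLagrangianMinus (n k j : ℕ) : Set (Fin (n + 1) → ℂ) :=
  {z ∈ realLagrangian n k j | ((starRingEnd ℂ) (milnorXi k j) * z 0).re < 0}

lemma milnorXi_pow (k j : ℕ) : milnorXi k j ^ (k + 1) = 1 := by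
  have hk : (k : ℂ) + 1 ≠ 0 := by exact_mod_cast Nat.succ_ne_zero k
  rw [milnorXi, ← Complex.exp_nat_mul, Complex.exp_eq_one_iff]
  refine ⟨j, ?_⟩
  push_cast
  field_simp

lemma conj_milnorXi_mul (k j : ℕ) : (starRingEnd ℂ) (milnorXi k j) * milnorXi k j = 1 := by
  have h : ‖milnorXi k j‖ = 1 := Complex.norm_eq_one_of_pow_eq_one (milnorXi_pow k j) (by omega)
  rw [mul_comm, Complex.mul_conj, Complex.normSq_eq_norm_sq, h]
  norm_num

/-- The point `(ξ_j x, i y₁, …, i yₙ)` of `Fix(ρ_j)` with real coordinates `x` and `y`. -/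
noncomputable def fixPoint (n k j : ℕ) (x : ℝ) (y : Fin n → ℝ) : Fin (n + 1) → ℂ :=
  Fin.cons (milnorXi k j * x) (fun m => I * y m)

lemma re_fixPoint (n k j : ℕ) (x : ℝ) (y : Fin n → ℝ) :
    ((starRingEnd ℂ) (milnorXi k j) * fixPoint n k j x y 0).re = x := by
  simp only [fixPoint, Fin.cons_zero]
  rw [← mul_assoc, conj_milnorXi_mul, one_mul, ofReal_re]

lemma milnorRho_eq_self_iff (n k j : ℕ) (z : Fin (n + 1) → ℂ) :
    milnorRho n k j z = z ↔ ∃ x y, z = fixPoint n k j x y := by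
  have h1 := conj_milnorXi_mul k j
  constructor
  · intro h
    have h0 : milnorXi k j ^ 2 * (starRingEnd ℂ) (z 0) = z 0 := by
      simpa [milnorRho] using congrFun h 0
    have hw : (starRingEnd ℂ) ((starRingEnd ℂ) (milnorXi k j) * z 0)
        = (starRingEnd ℂ) (milnorXi k j) * z 0 := by
      rw [map_mul, Complex.conj_conj]
      nth_rewrite 2 [← h0]
      linear_combination (-(milnorXi k j * (starRingEnd ℂ) (z 0))) * h1
    refine ⟨((starRingEnd ℂ) (milnorXi k j) * z 0).re, fun m => (z m.succ).im, ?_⟩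
    funext m
    refine Fin.cases ?_ (fun i => ?_) m
    · simp only [fixPoint, Fin.cons_zero]
      rw [Complex.conj_eq_iff_re.mp hw]
      linear_combination (-(z 0)) * h1
    · have hm : -(starRingEnd ℂ) (z i.succ) = z i.succ := by
        simpa [milnorRho] using congrFun h i.succ
      have hre : (z i.succ).re = 0 := by
        have := congrArg Complex.re hm
        simp only [neg_re, conj_re] at this
        linarith
      apply Complex.ext <;> simp [fixPoint, hre]
  · rintro ⟨x, y, rfl⟩
    funext m
    refine Fin.cases ?_ (fun i => ?_) m
    · simp only [milnorRho, fixPoint, Fin.cons_zero, if_true, map_mul, conj_ofReal]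
      linear_combination (milnorXi k j * x) * h1
    · simp [milnorRho, fixPoint]

lemma fixPoint_mem_milnorFiber_iff (n k j : ℕ) (x : ℝ) (y : Fin n → ℝ) :
    fixPoint n k j x y ∈ milnorFiber n k ↔ x ^ (k + 1) = 1 + ∑ m, y m ^ 2 := by
  have h : fixPoint n k j x y 0 ^ (k + 1) + ∑ m : Fin n, (fixPoint n k j x y m.succ) ^ 2
      = ((x ^ (k + 1) - ∑ m, y m ^ 2 : ℝ) : ℂ) := by
    simp only [fixPoint, Fin.cons_zero, Fin.cons_succ, mul_pow, milnorXi_pow, I_sq]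
    push_cast
    simp [Finset.sum_neg_distrib, sub_eq_add_neg]
  rw [milnorFiber, Set.mem_ofPred_eq, h]
  constructor
  · intro h
    have : x ^ (k + 1) - ∑ m, y m ^ 2 = 1 := by exact_mod_cast h
    linarith
  · intro h
    rw [h]
    simp

lemma mem_realLagrangian_iff (n k j : ℕ) (z : Fin (n + 1) → ℂ) :
    z ∈ realLagrangian n k j ↔
      ∃ x y, z = fixPoint n k j x y ∧ x ^ (k + 1) = 1 + ∑ m, y m ^ 2 := by
  rw [realLagrangian, Set.mem_inter_iff, Set.mem_ofPred_eq, milnorRho_eq_self_iff]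
  constructor
  · rintro ⟨⟨x, y, rfl⟩, h⟩
    exact ⟨x, y, rfl, (fixPoint_mem_milnorFiber_iff ..).mp h⟩
  · rintro ⟨x, y, rfl, h⟩
    exact ⟨⟨x, y, rfl⟩, (fixPoint_mem_milnorFiber_iff ..).mpr h⟩

/-- The positive real root `(1 + ∑ y_m²)^{1/(k+1)}`. -/
noncomputable def fiberRoot (n k : ℕ) (y : Fin n → ℝ) : ℝ :=
  (1 + ∑ m, y m ^ 2) ^ (((k + 1 : ℕ) : ℝ)⁻¹)

lemma one_add_sum_sq_pos (n : ℕ) (y : Fin n → ℝ) : 0 < 1 + ∑ m, y m ^ 2 := by positivity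

lemma fiberRoot_pos (n k : ℕ) (y : Fin n → ℝ) : 0 < fiberRoot n k y :=
  Real.rpow_pos_of_pos (one_add_sum_sq_pos n y) _

lemma fiberRoot_pow (n k : ℕ) (y : Fin n → ℝ) :
    fiberRoot n k y ^ (k + 1) = 1 + ∑ m, y m ^ 2 :=
  Real.rpow_inv_natCast_pow (one_add_sum_sq_pos n y).le (Nat.succ_ne_zero k)

lemma continuous_fiberRoot (n k : ℕ) : Continuous (fiberRoot n k) := by
  unfold fiberRoot
  exact Continuous.rpow_const (by fun_prop) fun y => Or.inl (one_add_sum_sq_pos n y).ne'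

lemma continuous_fixPoint (n k j : ℕ) {f : (Fin n → ℝ) → ℝ} (hf : Continuous f) :
    Continuous fun y => fixPoint n k j (f y) y := by
  refine continuous_pi fun m => ?_
  refine Fin.cases ?_ (fun i => ?_) m
  · simp only [fixPoint, Fin.cons_zero]
    fun_prop
  · simp only [fixPoint, Fin.cons_succ]
    fun_prop

lemma realLagrangianPlus_eq_range (n k j : ℕ) :
    realLagrangianPlus n k j = Set.range fun y => fixPoint n k j (fiberRoot n k y) y := by
  ext z
  rw [realLagrangianPlus, Set.mem_sep_iff, mem_realLagrangian_iff]
  constructor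
  · rintro ⟨⟨x, y, rfl, h⟩, hx⟩
    rw [re_fixPoint] at hx
    refine ⟨y, ?_⟩
    have : fiberRoot n k y = x := by
      rw [← fiberRoot_pow n k] at h
      exact ((pow_left_inj₀ hx.le (fiberRoot_pos n k y).le (Nat.succ_ne_zero k)).mp h).symm
    simp only [this]
  · rintro ⟨y, rfl⟩
    refine ⟨⟨_, y, rfl, fiberRoot_pow n k y⟩, ?_⟩
    simpa only [re_fixPoint] using fiberRoot_pos n k y

lemma realLagrangianMinus_eq_range (n k j : ℕ) (hko : Odd k) :
    realLagrangianMinus n k j = Set.range fun y => fixPoint n k j (-fiberRoot n k y) y := by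
  have he : Even (k + 1) := hko.add_one
  ext z
  rw [realLagrangianMinus, Set.mem_sep_iff, mem_realLagrangian_iff]
  constructor
  · rintro ⟨⟨x, y, rfl, h⟩, hx⟩
    rw [re_fixPoint] at hx
    refine ⟨y, ?_⟩
    have : -fiberRoot n k y = x := by
      rw [← fiberRoot_pow n k, ← he.neg_pow] at h
      rw [← (pow_left_inj₀ (neg_nonneg.mpr hx.le) (fiberRoot_pos n k y).le
        (Nat.succ_ne_zero k)).mp h, neg_neg]
    simp only [this]
  · rintro ⟨y, rfl⟩
    refine ⟨⟨_, y, rfl, (he.neg_pow _).trans (fiberRoot_pow n k y)⟩, ?_⟩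
    simpa only [re_fixPoint, neg_lt_zero] using fiberRoot_pos n k y

lemma re_ne_zero_of_mem_realLagrangian (n k j : ℕ) {z : Fin (n + 1) → ℂ}
    (hz : z ∈ realLagrangian n k j) : ((starRingEnd ℂ) (milnorXi k j) * z 0).re ≠ 0 := by
  obtain ⟨x, y, rfl, h⟩ := (mem_realLagrangian_iff ..).mp hz
  rw [re_fixPoint]
  rintro rfl
  rw [zero_pow (Nat.succ_ne_zero k)] at h
  exact (one_add_sum_sq_pos n y).ne h

theorem real_lagrangian_two_components_of_odd (n k j : ℕ)
    (hn : 1 ≤ n) (hk : 1 ≤ k) (hko : Odd k) (hj : j ≤ k) :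
    (realLagrangianPlus n k j).Nonempty ∧
    (realLagrangianMinus n k j).Nonempty ∧
    IsConnected (realLagrangianPlus n k j) ∧
    IsConnected (realLagrangianMinus n k j) ∧
    IsClopen {p : realLagrangian n k j | (p : Fin (n + 1) → ℂ) ∈ realLagrangianPlus n k j} ∧
    IsClopen {p : realLagrangian n k j | (p : Fin (n + 1) → ℂ) ∈ realLagrangianMinus n k j} ∧
    Disjoint (realLagrangianPlus n k j) (realLagrangianMinus n k j) ∧
    realLagrangianPlus n k j ∪ realLagrangianMinus n k j = realLagrangian n k j := by
  have hP : IsConnected (realLagrangianPlus n k j) := by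
    rw [realLagrangianPlus_eq_range]
    exact isConnected_range (continuous_fixPoint n k j (continuous_fiberRoot n k))
  have hM : IsConnected (realLagrangianMinus n k j) := by
    rw [realLagrangianMinus_eq_range n k j hko]
    exact isConnected_range (continuous_fixPoint n k j (continuous_fiberRoot n k).neg)
  have hc : Continuous fun p : realLagrangian n k j =>
      ((starRingEnd ℂ) (milnorXi k j) * (p : Fin (n + 1) → ℂ) 0).re :=
    continuous_re.comp
      (continuous_const.mul ((continuous_apply 0).comp continuous_subtype_val))
  have hne := fun p : realLagrangian n k j => re_ne_zero_of_mem_realLagrangian n k j p.2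
  refine ⟨hP.nonempty, hM.nonempty, hP, hM, ⟨?_, ?_⟩, ⟨?_, ?_⟩, ?_, ?_⟩
  -- The coordinate `x` does not vanish on `F`, so the strict sign condition is also a weak one.
  · convert isClosed_le continuous_const hc using 1
    ext p
    exact ⟨fun h => h.2.le, fun h => ⟨p.2, lt_of_le_of_ne h (hne p).symm⟩⟩
  · convert isOpen_lt continuous_const hc using 1
    ext p
    exact ⟨fun h => h.2, fun h => ⟨p.2, h⟩⟩
  · convert isClosed_le hc continuous_const using 1
    ext p
    exact ⟨fun h => h.2.le, fun h => ⟨p.2, lt_of_le_of_ne h (hne p)⟩⟩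
  · convert isOpen_lt hc continuous_const using 1
    ext p
    exact ⟨fun h => h.2, fun h => ⟨p.2, h⟩⟩
  · exact Set.disjoint_left.mpr fun z h h' => lt_asymm h.2 h'.2
  · ext z
    constructor
    · rintro (h | h) <;> exact h.1
    · intro h
      rcases lt_or_gt_of_ne (hne ⟨z, h⟩) with h' | h'
      · exact Or.inr ⟨h, h'⟩
      · exact Or.inl ⟨h, h'⟩
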